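/- Let B be an additive category and K^b(B) the bounded homotopy category of chain complexes in B. Define K^b(B)_{w≥0} to be the complexes homotopy equivalent to a complex concentrated in non-negative (homological) degrees and K^b(B)_{w≤0} those homotopy equivalent to a complex concentrated in non-positive degrees. Then (K^b(B)_{w≥0}, K^b(B)_{w≤0}) is a weight structure on the triangulated category K^b(B). -/

import Mathlib

/-!
Everything is expressed through `InRange B a b`, the complexes homotopy equivalent to one
supported in cohomological degrees `[a, b]`: the three classes of the statement are unions of
such classes.

A chain map between complexes with disjoint supports is zero, which gives orthogonality, and the
stupid truncation of a complex is a degreewise split extension of its two halves, which gives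
weight decompositions (`exists_truncation_triangle`).

Closure under retracts is the delicate point, because `B` need not be idempotent complete. Let `Y`
be a bounded retract of an object in degrees `≤ 0`, and `A ⟶ Y ⟶ W` its truncation triangle, with
`A` in degrees `≥ 1` and `W` in degrees `≤ 0`. By orthogonality `A ⟶ Y` is zero, so the triangle
splits: `W ≅ Y ⊞ A⟦1⟧`. Now `A⟦1⟧` is again a retract of an object in degrees `≤ 0`, and its top
degree is smaller than that of `Y`; by induction it lies in degrees `≤ 0`. Then `Y` is the cone of
a map `A⟦1⟧ ⟶ W` between objects in degrees `≤ 0`, hence lies in degrees `≤ 0`. The other class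
is treated dually.
-/

open CategoryTheory CategoryTheory.Limits CategoryTheory.Pretriangulated

variable (B : Type*) [Category B] [Preadditive B] [HasZeroObject B] [HasBinaryBiproducts B]

/-- The objects of the homotopy category of cochain complexes over `B` that are
bounded, i.e. isomorphic (= homotopy equivalent) to a complex vanishing outside a
finite range of degrees.  These form `K^b(B)` inside `K(B)`. -/
def bddSet : Set (HomotopyCategory B (ComplexShape.up ℤ)) :=
  {X | ∃ Y : CochainComplex B ℤ, (∃ a b : ℤ, ∀ i : ℤ, (i < a ∨ b < i) → IsZero (Y.X i)) ∧
    Nonempty ((HomotopyCategory.quotient B (ComplexShape.up ℤ)).obj Y ≅ X)}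

/-- `K^b(B)_{w≥0}`: bounded complexes homotopy equivalent to a complex concentrated in
non-negative homological degrees (equivalently, non-positive cohomological degrees). -/
def bddGE : Set (HomotopyCategory B (ComplexShape.up ℤ)) :=
  {X | ∃ Y : CochainComplex B ℤ, (∃ a : ℤ, ∀ i : ℤ, i < a → IsZero (Y.X i)) ∧
    (∀ i : ℤ, 0 < i → IsZero (Y.X i)) ∧
    Nonempty ((HomotopyCategory.quotient B (ComplexShape.up ℤ)).obj Y ≅ X)}

/-- `K^b(B)_{w≤0}`: bounded complexes homotopy equivalent to a complex concentrated in
non-positive homological degrees (equivalently, non-negative cohomological degrees). -/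
def bddLE : Set (HomotopyCategory B (ComplexShape.up ℤ)) :=
  {X | ∃ Y : CochainComplex B ℤ, (∃ b : ℤ, ∀ i : ℤ, b < i → IsZero (Y.X i)) ∧
    (∀ i : ℤ, i < 0 → IsZero (Y.X i)) ∧
    Nonempty ((HomotopyCategory.quotient B (ComplexShape.up ℤ)).obj Y ≅ X)}

/-- The objects of `K(B)` homotopy equivalent to a complex that vanishes outside the
cohomological degrees `[a, b]`. -/
def InRange (a b : ℤ) (X : HomotopyCategory B (ComplexShape.up ℤ)) : Prop :=
  ∃ Y : CochainComplex B ℤ, (∀ i : ℤ, (i < a ∨ b < i) → IsZero (Y.X i)) ∧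
    Nonempty ((HomotopyCategory.quotient B (ComplexShape.up ℤ)).obj Y ≅ X)

variable {B}

lemma distinguished_of_iso {D : Type*} [Category D] [Preadditive D] [HasZeroObject D] [HasShift D ℤ]
    [∀ n : ℤ, (shiftFunctor D n).Additive] [Pretriangulated D] {X Y Z Y' Z' : D}
    {f : X ⟶ Y} {g : Y ⟶ Z} {h : Z ⟶ X⟦(1 : ℤ)⟧} (hT : Triangle.mk f g h ∈ distTriang D)
    (e : Y ≅ Y') (e' : Z ≅ Z') :
    Triangle.mk (f ≫ e.hom) (e.inv ≫ g ≫ e'.hom) (e'.inv ≫ h) ∈ distTriang D :=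
  isomorphic_distinguished _ hT _
    (Triangle.isoMk _ _ (Iso.refl _) e.symm e'.symm (by simp [Triangle.mk]) (by simp [Triangle.mk])
      (by simp [Triangle.mk]))

namespace InRange

variable {a b c d : ℤ} {X Y : HomotopyCategory B (ComplexShape.up ℤ)}

lemma of_iso (hX : InRange B a b X) (e : X ≅ Y) : InRange B a b Y := by
  obtain ⟨K, hK, ⟨f⟩⟩ := hX
  exact ⟨K, hK, ⟨f ≪≫ e⟩⟩

lemma mono (hX : InRange B a b X) (hc : c ≤ a) (hd : b ≤ d) : InRange B c d X := by
  obtain ⟨K, hK, f⟩ := hX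
  exact ⟨K, fun i hi => hK i (by omega), f⟩

lemma shift (hX : InRange B a b X) (n : ℤ) : InRange B (a - n) (b - n) (X⟦n⟧) := by
  obtain ⟨K, hK, ⟨f⟩⟩ := hX
  exact ⟨K⟦n⟧, fun i hi => hK (i + n) (by omega),
    ⟨((HomotopyCategory.quotient B (ComplexShape.up ℤ)).commShiftIso n).app K ≪≫
      (shiftFunctor _ n).mapIso f⟩⟩

lemma hom_eq_zero (hX : InRange B a b X) (hY : InRange B c d Y) (h : d < a) (f : X ⟶ Y) :
    f = 0 := by
  obtain ⟨K, hK, ⟨e⟩⟩ := hX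
  obtain ⟨L, hL, ⟨e'⟩⟩ := hY
  obtain ⟨g, hg⟩ := (HomotopyCategory.quotient B (ComplexShape.up ℤ)).map_surjective
    (e.hom ≫ f ≫ e'.inv)
  have hg0 : g = 0 := by
    ext i
    by_cases hi : i < a
    · exact (hK i (Or.inl hi)).eq_of_src _ _
    · exact (hL i (Or.inr (by omega))).eq_of_tgt _ _
  rw [hg0, Functor.map_zero] at hg
  rw [← cancel_epi e.hom, ← cancel_mono e'.inv, Category.assoc, ← hg]
  simp

/-- The mapping cone of `X ⟶ Y` is `X` placed one degree lower together with `Y`. -/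
lemma cone {T : Triangle (HomotopyCategory B (ComplexShape.up ℤ))} (hT : T ∈ distTriang _)
    (h₁ : InRange B a b T.obj₁) (h₂ : InRange B c d T.obj₂) :
    InRange B (min (a - 1) c) (max (b - 1) d) T.obj₃ := by
  obtain ⟨K, hK, ⟨e⟩⟩ := h₁
  obtain ⟨L, hL, ⟨e'⟩⟩ := h₂
  obtain ⟨g, hg⟩ := (HomotopyCategory.quotient B (ComplexShape.up ℤ)).map_surjective
    (e.hom ≫ T.mor₁ ≫ e'.inv)
  refine ⟨CochainComplex.mappingCone g, fun i hi => ?_, ?_⟩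
  · rw [CochainComplex.mappingCone.isZero_X_iff]
    exact ⟨hK _ (by omega), hL _ (by omega)⟩
  · obtain ⟨φ, -, -⟩ := exists_iso_of_arrow_iso _ _
      (HomotopyCategory.mappingCone_triangleh_distinguished g) hT
      (Arrow.isoMk e e' (by
        change e.hom ≫ T.mor₁ = (HomotopyCategory.quotient B (ComplexShape.up ℤ)).map g ≫ e'.hom
        rw [hg]; simp))
    exact ⟨Triangle.π₃.mapIso φ⟩

end InRange

open ZeroObject in
/-- Each term `K.X i` is split into its part in degrees `≥ n` and its part in degrees `< n`,
one of which is zero. -/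
lemma exists_splitting (K : CochainComplex B ℤ) (n i : ℤ) :
    ∃ (P Q : B) (s : P ⟶ K.X i) (r : K.X i ⟶ P) (p : K.X i ⟶ Q) (t : Q ⟶ K.X i),
      s ≫ r = 𝟙 P ∧ t ≫ p = 𝟙 Q ∧ s ≫ p = 0 ∧ r ≫ s + p ≫ t = 𝟙 (K.X i) ∧
      (i < n ∨ IsZero (K.X i) → IsZero P) ∧ (n ≤ i ∨ IsZero (K.X i) → IsZero Q) := by
  by_cases h : n ≤ i
  · exact ⟨K.X i, (0 : B), 𝟙 _, 𝟙 _, 0, 0, by simp, (isZero_zero B).eq_of_src _ _, by simp, by simp,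
      fun h' => h'.resolve_left (by omega), fun _ => isZero_zero B⟩
  · exact ⟨(0 : B), K.X i, 0, 0, 𝟙 _, 𝟙 _, (isZero_zero B).eq_of_src _ _, by simp, by simp, by simp,
      fun _ => isZero_zero B, fun h' => h'.resolve_left (by omega)⟩

/-- The stupid truncation triangle: the terms in degrees `≥ n` form a subcomplex, the terms in
degrees `< n` the quotient, and the resulting short exact sequence is degreewise split. -/
lemma exists_truncation_triangle {a b : ℤ} (n : ℤ)
    {Z : HomotopyCategory B (ComplexShape.up ℤ)} (hZ : InRange B a b Z) :
    ∃ (X Y : HomotopyCategory B (ComplexShape.up ℤ)) (_ : InRange B n b X)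
      (_ : InRange B a (n - 1) Y) (f : X ⟶ Z) (g : Z ⟶ Y) (h : Y ⟶ X⟦(1 : ℤ)⟧),
      Triangle.mk f g h ∈ distTriang (HomotopyCategory B (ComplexShape.up ℤ)) := by
  obtain ⟨K, hK, ⟨e⟩⟩ := hZ
  choose P Q s r p t sr tp sp id hP hQ using exists_splitting K n
  have rs (i : ℤ) (hi : n ≤ i) : r i ≫ s i = 𝟙 _ := by
    have := id i
    rwa [(hQ i (Or.inl hi)).eq_of_tgt (p i) 0, zero_comp, add_zero] at this
  have pt (i : ℤ) (hi : i < n) : p i ≫ t i = 𝟙 _ := by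
    have := id i
    rwa [(hP i (Or.inl hi)).eq_of_tgt (r i) 0, zero_comp, zero_add] at this
  have hs (i j : ℤ) (hij : i + 1 = j) : s i ≫ K.d i j ≫ r j ≫ s j = s i ≫ K.d i j := by
    by_cases hj : n ≤ j
    · rw [rs j hj, Category.comp_id]
    · exact (hP i (Or.inl (by omega))).eq_of_src _ _
  have hp (i j : ℤ) (hij : i + 1 = j) : p i ≫ t i ≫ K.d i j ≫ p j = K.d i j ≫ p j := by
    by_cases hj : n ≤ j
    · exact (hQ j (Or.inl hj)).eq_of_tgt _ _
    · rw [← Category.assoc, pt i (by omega), Category.id_comp]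
  let K₁ : CochainComplex B ℤ :=
    { X := P
      d := fun i j => s i ≫ K.d i j ≫ r j
      shape := fun i j hij => by rw [K.shape i j hij]; simp
      d_comp_d' := fun i j k hij _ => by
        have := hs i j hij
        simp only [Category.assoc]
        rw [reassoc_of% this]
        simp }
  let K₃ : CochainComplex B ℤ :=
    { X := Q
      d := fun i j => t i ≫ K.d i j ≫ p j
      shape := fun i j hij => by rw [K.shape i j hij]; simp
      d_comp_d' := fun i j k _ hjk => by
        have := hp j k hjk
        simp only [Category.assoc]
        rw [this]
        simp }
  let f : K₁ ⟶ K :=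
    { f := s
      comm' := fun i j hij => by simpa [K₁] using (hs i j hij).symm }
  let g : K ⟶ K₃ :=
    { f := p
      comm' := fun i j hij => by simpa [K₃] using hp i j hij }
  let S : ShortComplex (CochainComplex B ℤ) := ShortComplex.mk f g (by ext i; exact sp i)
  let σ (i : ℤ) : (S.map (HomologicalComplex.eval B _ i)).Splitting :=
    { r := r i
      s := t i
      f_r := sr i
      s_g := tp i
      id := id i }
  have hT : CochainComplex.trianglehOfDegreewiseSplit S σ ∈
      distTriang (HomotopyCategory B (ComplexShape.up ℤ)) :=
    (HomotopyCategory.distinguished_iff_iso_trianglehOfDegreewiseSplit _).2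
      ⟨S, σ, ⟨Iso.refl _⟩⟩
  let T := CochainComplex.trianglehOfDegreewiseSplit S σ
  let e' : T.obj₂ ≅ Z := e
  refine ⟨T.obj₁, T.obj₃, ⟨K₁, fun i hi => ?_, ⟨Iso.refl _⟩⟩, ⟨K₃, fun i hi => ?_, ⟨Iso.refl _⟩⟩,
    _, _, _, distinguished_of_iso hT e' (Iso.refl _)⟩
  · exact hP i (hi.imp_right fun h => hK i (Or.inr h))
  · by_cases h : n ≤ i
    · exact hQ i (Or.inl h)
    · exact hQ i (Or.inr (hK i (Or.inl (by omega))))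

/-- Truncating `Y` gives a triangle `A ⟶ Y ⟶ W` with `A` in degrees `≥ 1`. As `Y` is a retract
of an object in degrees `≤ 0`, the first map vanishes, so `W ≅ Y ⊞ A⟦1⟧`. Here `A⟦1⟧` is a retract
of `W` with smaller top degree, so by induction it lies in degrees `≤ 0`, and hence so does `Y`,
being the cone of `A⟦1⟧ ⟶ W`. -/
lemma exists_inRange_of_retract_nonpos (m : ℕ) :
    ∀ {a c : ℤ} {X Y : HomotopyCategory B (ComplexShape.up ℤ)}, InRange B a 0 X →
      InRange B c m Y → ∀ (i : Y ⟶ X) (r : X ⟶ Y), i ≫ r = 𝟙 Y → ∃ a', InRange B a' 0 Y := by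
  induction m with
  | zero => exact fun _ hY _ _ _ => ⟨_, hY⟩
  | succ m ih =>
    intro a c X Y hX hY i r hir
    obtain ⟨A, W, hA, hW, f, g, h, hT⟩ := exists_truncation_triangle 1 hY
    have hf : f = 0 := by
      have : f ≫ i = 0 := hA.hom_eq_zero hX (by omega) _
      rw [← Category.comp_id f, ← hir, ← Category.assoc, this, zero_comp]
    obtain ⟨e, -, -⟩ := exists_iso_binaryBiproduct_of_distTriang _ (rot_of_distTriang _ hT)
      (by
        change -(f⟦(1 : ℤ)⟧') = 0
        rw [hf, Functor.map_zero, neg_zero])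
    change W ≅ Y ⊞ A⟦(1 : ℤ)⟧ at e
    have hA' : InRange B 0 m (A⟦(1 : ℤ)⟧) := (hA.shift 1).mono (by omega) (by push_cast; omega)
    obtain ⟨a', ha'⟩ := ih hW hA' (biprod.inr ≫ e.inv) (e.hom ≫ biprod.snd) (by simp)
    exact ⟨_, (InRange.cone (binaryBiproductTriangle_distinguished (A⟦(1 : ℤ)⟧) Y) ha'
      (hW.of_iso (e ≪≫ biprod.braiding _ _))).mono le_rfl (by omega)⟩

/-- Dual to `exists_inRange_of_retract_nonpos`: in a truncation triangle `A ⟶ Y ⟶ W` with `W` in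
degrees `< 0` the second map vanishes, so `A ≅ W⟦-1⟧ ⊞ Y`, and the induction is on the bottom
degree. -/
lemma exists_inRange_of_retract_nonneg (m : ℕ) :
    ∀ {b d : ℤ} {X Y : HomotopyCategory B (ComplexShape.up ℤ)}, InRange B 0 b X →
      InRange B (-m) d Y → ∀ (i : Y ⟶ X) (r : X ⟶ Y), i ≫ r = 𝟙 Y → ∃ b', InRange B 0 b' Y := by
  induction m with
  | zero => exact fun _ hY _ _ _ => ⟨_, hY.mono (by simp) le_rfl⟩
  | succ m ih =>
    intro b d X Y hX hY i r hir
    obtain ⟨A, W, hA, hW, f, g, h, hT⟩ := exists_truncation_triangle 0 hY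
    have hg : g = 0 := by
      have : r ≫ g = 0 := hX.hom_eq_zero hW (by omega) _
      rw [← Category.id_comp g, ← hir, Category.assoc, this, comp_zero]
    obtain ⟨e, -, -⟩ := exists_iso_binaryBiproduct_of_distTriang _ (inv_rot_of_distTriang _ hT)
      (by
        change g ≫ _ = 0
        rw [hg]
        exact zero_comp)
    change A ≅ W⟦(-1 : ℤ)⟧ ⊞ Y at e
    have hW' : InRange B (-m) 0 (W⟦(-1 : ℤ)⟧) :=
      (hW.shift (-1)).mono (by push_cast; omega) (by omega)
    obtain ⟨b', hb'⟩ := ih hA hW' (biprod.inl ≫ e.inv) (e.hom ≫ biprod.fst) (by simp)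
    have hY' := InRange.cone
      (rot_of_distTriang _ (binaryBiproductTriangle_distinguished Y (W⟦(-1 : ℤ)⟧)))
      (hA.of_iso (e ≪≫ biprod.braiding _ _)) hb'
    exact ⟨_, ((hY'.shift (-1)).of_iso
      ((shiftEquiv (HomotopyCategory B (ComplexShape.up ℤ)) (1 : ℤ)).unitIso.app Y).symm).mono
        (by omega) le_rfl⟩

variable (B)

lemma mem_bddSet_iff (X : HomotopyCategory B (ComplexShape.up ℤ)) :
    X ∈ bddSet B ↔ ∃ a b, InRange B a b X :=
  ⟨fun ⟨K, ⟨a, b, h⟩, e⟩ => ⟨a, b, K, h, e⟩, fun ⟨a, b, K, h, e⟩ => ⟨K, ⟨a, b, h⟩, e⟩⟩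

lemma mem_bddGE_iff (X : HomotopyCategory B (ComplexShape.up ℤ)) :
    X ∈ bddGE B ↔ ∃ a, InRange B a 0 X :=
  ⟨fun ⟨K, ⟨a, h⟩, h', e⟩ => ⟨a, K, fun i hi => hi.elim (h i) (h' i), e⟩,
    fun ⟨a, K, h, e⟩ => ⟨K, ⟨a, fun i hi => h i (Or.inl hi)⟩, fun i hi => h i (Or.inr hi), e⟩⟩

lemma mem_bddLE_iff (X : HomotopyCategory B (ComplexShape.up ℤ)) :
    X ∈ bddLE B ↔ ∃ b, InRange B 0 b X :=
  ⟨fun ⟨K, ⟨b, h⟩, h', e⟩ => ⟨b, K, fun i hi => hi.elim (h' i) (h i), e⟩,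
    fun ⟨b, K, h, e⟩ => ⟨K, ⟨b, fun i hi => h i (Or.inr hi)⟩, fun i hi => h i (Or.inl hi), e⟩⟩

/-- `(K^b(B)_{w≥0}, K^b(B)_{w≤0})` is a weight structure on the bounded homotopy
category `K^b(B)`: both classes are closed under retracts, satisfy the shift
stability and orthogonality axioms, and every bounded complex admits a weight
decomposition within `K^b(B)`. -/
theorem Kb_standard_weight_structure :
    (∀ X Y : HomotopyCategory B (ComplexShape.up ℤ), X ∈ bddGE B →
      Y ∈ bddSet B → (∃ (i : Y ⟶ X) (r : X ⟶ Y), i ≫ r = 𝟙 Y) → Y ∈ bddGE B) ∧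
    (∀ X Y : HomotopyCategory B (ComplexShape.up ℤ), X ∈ bddLE B →
      Y ∈ bddSet B → (∃ (i : Y ⟶ X) (r : X ⟶ Y), i ≫ r = 𝟙 Y) → Y ∈ bddLE B) ∧
    (∀ X : HomotopyCategory B (ComplexShape.up ℤ), X ∈ bddGE B → X⟦(1 : ℤ)⟧ ∈ bddGE B) ∧
    (∀ X : HomotopyCategory B (ComplexShape.up ℤ), X ∈ bddLE B → X⟦(-1 : ℤ)⟧ ∈ bddLE B) ∧
    (∀ X Y : HomotopyCategory B (ComplexShape.up ℤ), X ∈ bddLE B → Y ∈ bddGE B →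
      ∀ f : X ⟶ Y⟦(1 : ℤ)⟧, f = 0) ∧
    (∀ Z : HomotopyCategory B (ComplexShape.up ℤ), Z ∈ bddSet B →
      ∃ (X Y : HomotopyCategory B (ComplexShape.up ℤ)) (_ : X ∈ bddLE B) (_ : Y ∈ bddGE B)
        (f : X ⟶ Z) (g : Z ⟶ Y⟦(1 : ℤ)⟧) (h : Y⟦(1 : ℤ)⟧ ⟶ X⟦(1 : ℤ)⟧),
        Triangle.mk f g h ∈ distTriang (HomotopyCategory B (ComplexShape.up ℤ))) := by
  simp only [mem_bddSet_iff, mem_bddGE_iff, mem_bddLE_iff]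
  refine ⟨?_, ?_, ?_, ?_, ?_, ?_⟩
  · rintro X Y ⟨a, hX⟩ ⟨c, d, hY⟩ ⟨i, r, hir⟩
    exact exists_inRange_of_retract_nonpos d.toNat hX (hY.mono le_rfl (by omega)) i r hir
  · rintro X Y ⟨b, hX⟩ ⟨c, d, hY⟩ ⟨i, r, hir⟩
    exact exists_inRange_of_retract_nonneg (-c).toNat hX (hY.mono (by omega) le_rfl) i r hir
  · rintro X ⟨a, hX⟩
    exact ⟨_, (hX.shift 1).mono le_rfl (by omega)⟩
  · rintro X ⟨b, hX⟩
    exact ⟨_, (hX.shift (-1)).mono (by omega) le_rfl⟩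
  · rintro X Y ⟨b, hX⟩ ⟨a, hY⟩ f
    exact hX.hom_eq_zero (hY.shift 1) (by omega) f
  · rintro Z ⟨a, b, hZ⟩
    obtain ⟨X, W, hX, hW, f, g, h, hT⟩ := exists_truncation_triangle 0 hZ
    -- The third vertex of the truncation triangle is rewritten as `Y⟦1⟧` with `Y = W⟦-1⟧`.
    let e : W⟦(-1 : ℤ)⟧⟦(1 : ℤ)⟧ ≅ W :=
      (shiftEquiv (HomotopyCategory B (ComplexShape.up ℤ)) (1 : ℤ)).counitIso.app W
    exact ⟨X, W⟦(-1 : ℤ)⟧, ⟨b, hX⟩, ⟨_, (hW.shift (-1)).mono le_rfl (by omega)⟩,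
      _, _, _, distinguished_of_iso hT (Iso.refl _) e.symm⟩
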